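/- Let V ⊆ ℝⁿ and W ⊆ ℝᵐ be real algebraic sets, with coordinate ring ℝ[V] = ℝ[x₁,…,xₙ]/I(V), and let π : V(ℝ) → W(ℝ) be a proper algebraic map (preimages of compact sets are compact for the Euclidean topologies). Then there exist constants c, d ∈ ℕ such that for every v ∈ V(ℝ) and every coordinate function xᵢ one has |xᵢ(v)| ≤ c(1 + N(π(v))²)ᵈ, where N(s) = √(s₁² + ⋯ + sₘ²) is the Euclidean norm. -/

import Mathlib

/-!
Write `V` as the zero set of a single polynomial `F ≥ 0` and put `Q = ∑ j, q j ^ 2`. The proof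
replaces quantifier elimination by an elimination argument: there is a nonzero polynomial `G` with
`G(f(r), r) = 0`, where `f(r)` is the minimum of `Q` over the points of `V` with `|v|² = r`.

To find `G`, minimise the penalty functional
`E = l * Q + l ^ 2 * (F + (|v|² - r) ^ 2) + ∑ i, v i ^ N` over the whole space, with `N` even and
large. The leading forms of its partial derivatives are `N * v i ^ (N - 1)`, so its critical locus
is finite over the parameter ring `ℝ[r][l]` and the critical values of `E` satisfy a monic
polynomial over that ring. The minimal value `m(l)` is a critical value, and `m(l) / l → f(r)` as
`l → ∞`; the leading coefficient in `l` of the relation satisfied by `m(l) / l` is `G`.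

For large `f(r)`, Cauchy's bound on the roots of `G(f(r), ·)` bounds `r` by a power of `f(r)`, which
is at most `Q(v)` for every `v ∈ V` with `|v|² = r`. For the remaining `r`, properness bounds the
minimisers.
-/

section CriticalValues

open MvPolynomial

variable {σ R : Type*}

theorem monomial_eq_monomial_sub_single_mul_X_pow [CommSemiring R] {m : σ →₀ ℕ} {i : σ} {e : ℕ}
    (he : e ≤ m i) (a : R) :
    monomial m a = monomial (m - Finsupp.single i e) a * X i ^ e := by
  rw [X_pow_eq_monomial, monomial_mul, mul_one,
    tsub_add_cancel_of_le (Finsupp.single_le_iff.2 he)]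

theorem exists_le_apply_of_card_mul_lt_degree [Fintype σ] {m : σ →₀ ℕ} {e : ℕ}
    (h : Fintype.card σ * (e - 1) < m.degree) : ∃ i, e ≤ m i := by
  by_contra! hlt
  refine h.not_ge ?_
  calc m.degree = ∑ i, m i := Finsupp.degree_eq_sum m
    _ ≤ ∑ _i : σ, (e - 1) := Finset.sum_le_sum fun i _ ↦ Nat.le_sub_one_of_lt (hlt i)
    _ = Fintype.card σ * (e - 1) := by simp

theorem mem_restrictTotalDegree_sup_of_X_pow_sub_mem [Fintype σ] [CommRing R]
    {I : Ideal (MvPolynomial σ R)} {e : ℕ} {q : σ → MvPolynomial σ R}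
    (hq : ∀ i, (q i).totalDegree < e) (hI : ∀ i, X i ^ e - q i ∈ I) (p : MvPolynomial σ R) :
    p ∈ restrictTotalDegree σ R (Fintype.card σ * (e - 1)) ⊔ I.restrictScalars R := by
  induction hd : p.totalDegree using Nat.strong_induction_on generalizing p with
  | _ d ih =>
  subst hd
  rw [p.as_sum]
  refine Submodule.sum_mem _ fun m hm ↦ ?_
  rcases le_or_gt m.degree (Fintype.card σ * (e - 1)) with hsmall | hlarge
  · exact Submodule.mem_sup_left <| (mem_restrictTotalDegree _ _ _).2 <|
      (totalDegree_monomial_le _ _).trans hsmall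
  obtain ⟨i, hi⟩ := exists_le_apply_of_card_mul_lt_degree hlarge
  set μ := monomial (m - Finsupp.single i e) (coeff m p)
  have hreduce : monomial m (coeff m p) = μ * q i + μ * (X i ^ e - q i) := by
    rw [← mul_add, add_sub_cancel, monomial_eq_monomial_sub_single_mul_X_pow hi]
  have hdegree : (m - Finsupp.single i e).degree + e = m.degree := by
    conv_rhs => rw [← tsub_add_cancel_of_le (Finsupp.single_le_iff.2 hi)]
    simp
  have hdrop : (μ * q i).totalDegree < p.totalDegree :=
    calc (μ * q i).totalDegree ≤ μ.totalDegree + (q i).totalDegree := totalDegree_mul _ _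
      _ < (m - Finsupp.single i e).degree + e :=
        add_lt_add_of_le_of_lt (totalDegree_monomial_le _ _) (hq i)
      _ ≤ p.totalDegree := hdegree.trans_le (le_totalDegree hm)
  rw [hreduce]
  exact add_mem (ih _ hdrop _ rfl) (Submodule.mem_sup_right (I.mul_mem_left μ (hI i)))

theorem module_finite_quotient_of_X_pow_sub_mem [Finite σ] [CommRing R]
    {I : Ideal (MvPolynomial σ R)} {e : ℕ} {q : σ → MvPolynomial σ R}
    (hq : ∀ i, (q i).totalDegree < e) (hI : ∀ i, X i ^ e - q i ∈ I) :
    Module.Finite R (MvPolynomial σ R ⧸ I) := by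
  cases nonempty_fintype σ
  refine .of_surjective ((Ideal.Quotient.mkₐ R I).toLinearMap.domRestrict
    (restrictTotalDegree σ R (Fintype.card σ * (e - 1)))) fun x ↦ ?_
  obtain ⟨p, rfl⟩ := Ideal.Quotient.mk_surjective x
  obtain ⟨a, ha, b, hb, rfl⟩ :=
    Submodule.mem_sup.1 (mem_restrictTotalDegree_sup_of_X_pow_sub_mem hq hI p)
  exact ⟨⟨a, ha⟩, Ideal.Quotient.eq.2 (by simpa using hb)⟩

theorem totalDegree_pderiv_le [CommSemiring R] (i : σ) (p : MvPolynomial σ R) :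
    (pderiv i p).totalDegree ≤ p.totalDegree := by
  refine Finset.sup_le fun m hm ↦ ?_
  rw [mem_support_iff, coeff_pderiv] at hm
  have hm' : m + Finsupp.single i 1 ∈ p.support := mem_support_iff.2 (left_ne_zero_of_mul hm)
  calc m.degree ≤ (m + Finsupp.single i 1).degree := by simp
    _ ≤ p.totalDegree := le_totalDegree hm'

/-- The ideal generated by the partial derivatives of `E`; it cuts out the critical points of `E`,
so that the quotient by it is the algebra of functions on the critical locus. -/
noncomputable def gradientIdeal [CommSemiring R] (E : MvPolynomial σ R) :
    Ideal (MvPolynomial σ R) :=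
  Ideal.span (Set.range fun i ↦ pderiv i E)

theorem pderiv_sum_X_pow [Fintype σ] [CommSemiring R] (i : σ) (N : ℕ) :
    pderiv i (∑ j, X j ^ N : MvPolynomial σ R) =
      (N : MvPolynomial σ R) * X i ^ (N - 1) := by
  rw [map_sum, Finset.sum_eq_single i]
  · simp
  · intro j _ hj
    simp [pderiv_X_of_ne hj]
  · simp

theorem module_finite_quotient_gradientIdeal [Fintype σ] [CommRing R] [Algebra ℚ R]
    {L : MvPolynomial σ R} {N : ℕ} (hN : L.totalDegree + 1 < N) :
    Module.Finite R (MvPolynomial σ R ⧸ gradientIdeal (L + ∑ i, X i ^ N : MvPolynomial σ R)) := by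
  set c : MvPolynomial σ R := C (algebraMap ℚ R (N : ℚ)⁻¹) with hc
  have hcN : c * N = 1 := by
    have hN0 : (N : ℚ) ≠ 0 := Nat.cast_ne_zero.2 (by omega)
    rw [hc, ← map_natCast (C (σ := σ) (R := R)), ← map_natCast (algebraMap ℚ R), ← map_mul,
      ← map_mul, inv_mul_cancel₀ hN0, map_one, map_one]
  refine module_finite_quotient_of_X_pow_sub_mem (e := N - 1) (q := fun i ↦ -(c * pderiv i L))
    (fun i ↦ ?_) fun i ↦ ?_
  · calc (-(c * pderiv i L)).totalDegree ≤ c.totalDegree + (pderiv i L).totalDegree := by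
          rw [totalDegree_neg]; exact totalDegree_mul _ _
      _ ≤ 0 + L.totalDegree := add_le_add (totalDegree_C _).le (totalDegree_pderiv_le i L)
      _ < N - 1 := by omega
  · have hpderiv : X i ^ (N - 1) - -(c * pderiv i L) = c * pderiv i (L + ∑ j, X j ^ N) := by
      rw [map_add, pderiv_sum_X_pow]
      linear_combination -X i ^ (N - 1) * hcN
    rw [hpderiv]
    exact Ideal.mul_mem_left _ _ (Ideal.subset_span ⟨i, rfl⟩)

theorem exists_monic_eval₂_critical_value_eq_zero [CommRing R] (E : MvPolynomial σ R)
    [Module.Finite R (MvPolynomial σ R ⧸ gradientIdeal E)] :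
    ∃ g : Polynomial R, g.Monic ∧ ∀ {S : Type*} [CommRing S] (ρ : R →+* S) (v : σ → S),
      (∀ i, eval₂ ρ v (pderiv i E) = 0) → g.eval₂ ρ (eval₂ ρ v E) = 0 := by
  obtain ⟨g, hg, hroot⟩ : IsIntegral R (Ideal.Quotient.mk (gradientIdeal E) E) :=
    Algebra.IsIntegral.isIntegral _
  refine ⟨g, hg, fun ρ v hv ↦ ?_⟩
  have hker : ∀ p ∈ gradientIdeal E, eval₂Hom ρ v p = 0 :=
    (Ideal.span_le (I := RingHom.ker (eval₂Hom ρ v))).2 (Set.range_subset_iff.2 hv)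
  have hcomp : (Ideal.Quotient.lift (gradientIdeal E) (eval₂Hom ρ v) hker).comp
      (algebraMap R (MvPolynomial σ R ⧸ gradientIdeal E)) = ρ := by
    ext a
    exact eval₂_C ρ v a
  have := congr_arg (Ideal.Quotient.lift (gradientIdeal E) (eval₂Hom ρ v) hker) hroot
  rwa [Polynomial.hom_eval₂, hcomp, Ideal.Quotient.lift_mk, map_zero] at this

theorem hasDerivAt_eval_update {𝕜 : Type*} [NontriviallyNormedField 𝕜] [DecidableEq σ]
    (p : MvPolynomial σ 𝕜) (v : σ → 𝕜) (i : σ) (x : 𝕜) :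
    HasDerivAt (fun x ↦ eval (Function.update v i x) p)
      (eval (Function.update v i x) (pderiv i p)) x := by
  induction p using MvPolynomial.induction_on with
  | C a => simpa using hasDerivAt_const x a
  | add p q hp hq =>
    simp only [map_add]
    exact hp.add hq
  | mul_X p j hp =>
    have hX : HasDerivAt (fun x ↦ Function.update v i x j)
        (eval (Function.update v i x) (pderiv i (X j))) x := by
      rcases eq_or_ne j i with rfl | hij
      · simpa using hasDerivAt_id' x
      · simpa [hij, pderiv_X_of_ne hij] using hasDerivAt_const x (v j)
    simp only [map_mul, eval_X, pderiv_mul, map_add]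
    exact hp.mul hX

theorem eval₂_pderiv_eq_zero_of_forall_le [CommSemiring R] (ρ : R →+* ℝ) {p : MvPolynomial σ R}
    {v : σ → ℝ} (hv : ∀ w, eval₂ ρ v p ≤ eval₂ ρ w p) (i : σ) : eval₂ ρ v (pderiv i p) = 0 := by
  classical
  simp only [← eval_map, ← pderiv_map] at hv ⊢
  have hderiv := hasDerivAt_eval_update (map ρ p) v i (v i)
  rw [Function.update_eq_self] at hderiv
  refine IsLocalMin.hasDerivAt_eq_zero (.of_forall fun x ↦ ?_) hderiv
  simpa only [Function.update_eq_self] using hv _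

end CriticalValues

section Penalty

open Set Filter Topology

variable {Y : Type*}

/-- The penalty functional used to minimise `f` on the zero set of `h ≥ 0`: as `l → ∞` the
constraint is enforced at scale `l ^ 2`, the objective acts at scale `l`, and `b` is a regularising
term of bounded size. -/
def penalty (f h b : Y → ℝ) (l : ℝ) (y : Y) : ℝ := l * f y + l ^ 2 * h y + b y

variable [TopologicalSpace Y] {f h b : Y → ℝ}

theorem exists_forall_penalty_le [Nonempty Y] (hf : Continuous f) (hh : Continuous h)
    (hb : Continuous b) (hf₀ : ∀ y, 0 ≤ f y) (hh₀ : ∀ y, 0 ≤ h y) (hb₀ : ∀ y, 0 ≤ b y)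
    (hcoercive : Tendsto h (cocompact Y) atTop) {l : ℝ} (hl : 1 ≤ l) :
    ∃ y, ∀ z, penalty f h b l y ≤ penalty f h b l z := by
  refine Continuous.exists_forall_le (by unfold penalty; fun_prop)
    (tendsto_atTop_mono (fun y ↦ ?_) hcoercive)
  have hlf : 0 ≤ l * f y := mul_nonneg (zero_le_one.trans hl) (hf₀ y)
  have hlh : h y ≤ l ^ 2 * h y := le_mul_of_one_le_left (hh₀ y) (one_le_pow₀ hl)
  unfold penalty
  linarith [hb₀ y]

theorem exists_pos_forall_lt_of_isMinOn (hf : Continuous f) (hh : Continuous h)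
    (hh₀ : ∀ y, 0 ≤ h y) (hcoercive : Tendsto h (cocompact Y) atTop) {u : Y}
    (hu : IsMinOn f {y | h y = 0} u) {a : ℝ} (ha : a < f u) :
    ∃ δ > 0, ∀ y, h y < δ → a < f y := by
  rcases {y | f y ≤ a}.eq_empty_or_nonempty with hempty | ⟨x, hx⟩
  · exact ⟨1, one_pos, fun y _ ↦ not_le.1 (eq_empty_iff_forall_notMem.1 hempty y)⟩
  obtain ⟨w, hwa, hw⟩ := hh.continuousOn.exists_isMinOn' (isClosed_le hf continuous_const) hx
    ((hcoercive.eventually_ge_atTop (h x)).filter_mono inf_le_left)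
  refine ⟨h w, (hh₀ w).lt_of_ne' fun hw₀ ↦ ?_, fun y hy ↦ ?_⟩
  · exact ha.not_ge ((hu hw₀).trans hwa)
  · by_contra! hya
    exact hy.not_ge (hw hya)

theorem tendsto_penalty_div (hf : Continuous f) (hh : Continuous h)
    (hf₀ : ∀ y, 0 ≤ f y) (hh₀ : ∀ y, 0 ≤ h y) (hb₀ : ∀ y, 0 ≤ b y)
    (hcoercive : Tendsto h (cocompact Y) atTop) {u : Y} (hhu : h u = 0)
    (hu : IsMinOn f {y | h y = 0} u) {v : ℝ → Y}
    (hv : ∀ᶠ l in atTop, ∀ z, penalty f h b l (v l) ≤ penalty f h b l z) :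
    Tendsto (fun l ↦ penalty f h b l (v l) / l) atTop (𝓝 (f u)) := by
  have hupper : ∀ᶠ l in atTop, penalty f h b l (v l) / l ≤ f u + b u / l := by
    filter_upwards [hv, eventually_gt_atTop 0] with l hvl hl
    calc penalty f h b l (v l) / l ≤ penalty f h b l u / l := by gcongr; exact hvl u
      _ = f u + b u / l := by unfold penalty; rw [hhu]; field_simp; ring
  have hlower : ∀ᶠ l in atTop, f (v l) + l * h (v l) ≤ penalty f h b l (v l) / l := by
    filter_upwards [eventually_gt_atTop 0] with l hl
    rw [le_div_iff₀ hl]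
    unfold penalty
    linarith [hb₀ (v l)]
  have hregular : Tendsto (fun l ↦ f u + b u / l) atTop (𝓝 (f u)) := by
    simpa using (tendsto_const_nhds (x := b u)).div_atTop tendsto_id |>.const_add (f u)
  have hconstraint : Tendsto (fun l ↦ h (v l)) atTop (𝓝 0) := by
    refine tendsto_of_tendsto_of_tendsto_of_le_of_le' tendsto_const_nhds
      (hregular.div_atTop tendsto_id) (.of_forall fun l ↦ hh₀ (v l)) ?_
    filter_upwards [hupper, hlower, eventually_gt_atTop 0] with l hul hll hl
    rw [id, le_div_iff₀ hl]
    linarith [hf₀ (v l)]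
  refine tendsto_order.2 ⟨fun a ha ↦ ?_, fun a ha ↦ ?_⟩
  · obtain ⟨δ, hδ, hlt⟩ := exists_pos_forall_lt_of_isMinOn hf hh hh₀ hcoercive hu ha
    filter_upwards [hconstraint.eventually_lt_const hδ, hlower, eventually_gt_atTop 0]
      with l hlδ hll hl
    have := mul_nonneg hl.le (hh₀ (v l))
    linarith [hlt _ hlδ]
  · filter_upwards [hupper, hregular.eventually_lt_const ha] with l hul hla
    exact hul.trans_lt hla

end Penalty

section Asymptotics

open Polynomial Bivariate Filter Topology

theorem map_leadingCoeff_eq_zero_of_tendsto_atTop {ι A : Type*} [Semiring A] {l : Filter ι}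
    [l.NeBot] (p : A[X]) {ρ : ι → A →+* ℝ} {ρ₀ : A →+* ℝ} {x : ι → ℝ}
    (hρ : ∀ a, Tendsto (fun j ↦ ρ j a) l (𝓝 (ρ₀ a))) (hx : Tendsto x l atTop)
    (hroot : ∀ᶠ j in l, p.eval₂ (ρ j) (x j) = 0) : ρ₀ p.leadingCoeff = 0 := by
  have hlow : Tendsto (fun j ↦ ∑ k ∈ Finset.range p.natDegree,
      ρ j (p.coeff k) * (x j ^ k / x j ^ p.natDegree)) l (𝓝 0) := by
    rw [← Finset.sum_const_zero (s := Finset.range p.natDegree)]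
    refine tendsto_finsetSum _ fun k hk ↦ ?_
    simpa using (hρ (p.coeff k)).mul
      ((tendsto_pow_div_pow_atTop_zero (Finset.mem_range.1 hk)).comp hx)
  have hsum := hlow.add (hρ p.leadingCoeff)
  rw [zero_add] at hsum
  refine tendsto_nhds_unique (hsum.congr' ?_) tendsto_const_nhds
  filter_upwards [hroot, hx.eventually_gt_atTop 0] with j hj hxj
  rw [eval₂_eq_sum_range, Finset.sum_range_succ] at hj
  have hpow : x j ^ p.natDegree ≠ 0 := by positivity
  simp only [← mul_div_assoc, ← Finset.sum_div]
  rw [div_add' _ _ _ hpow, leadingCoeff, hj, zero_div]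

/-- The substitution `g(l, y) ↦ g(l, t * l)`, which rewrites a relation between a parameter `l` and
a value `y` as a relation between `l` and the slope `t = y / l`. The inner variable is `l` in `g`
but `t` in the result, where `l` is the outer one: the leading coefficient is taken in `l`. -/
noncomputable def toSlope (A : Type*) [CommSemiring A] : A[X][Y] →+* A[X][Y] :=
  eval₂RingHom (mapRingHom C) (C X * X)

theorem eval₂_toSlope {A S : Type*} [CommSemiring A] [CommSemiring S] (ρ : A →+* S) (x y : S)
    (g : A[X][Y]) :
    (toSlope A g).eval₂ (eval₂RingHom ρ x) y = g.eval₂ (eval₂RingHom ρ y) (x * y) := by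
  have hcomp : (eval₂RingHom (eval₂RingHom ρ x) y).comp (toSlope A) =
      eval₂RingHom (eval₂RingHom ρ y) (x * y) := by
    ext <;> simp [toSlope]
  exact DFunLike.congr_fun hcomp g

theorem toSlope_ne_zero {A : Type*} [CommSemiring A] [Nontrivial A] {g : A[X][Y]} (hg : g.Monic) :
    toSlope A g ≠ 0 := by
  have : (evalRingHom 1).comp (toSlope A) = mapRingHom (evalRingHom 1) := by
    ext <;> simp [toSlope]
  intro h0
  have := DFunLike.congr_fun this g
  rw [RingHom.comp_apply, h0, map_zero] at this
  exact (hg.map (evalRingHom 1)).ne_zero this.symm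

theorem exists_eval₂_eq_zero_of_tendsto_div {A : Type*} [CommSemiring A] [Nontrivial A]
    {g : A[X][Y]} (hg : g.Monic) :
    ∃ G : A[X], G ≠ 0 ∧ ∀ (ρ : A →+* ℝ) (c : ℝ) (m : ℝ → ℝ),
      Tendsto (fun l ↦ m l / l) atTop (𝓝 c) →
      (∀ᶠ l in atTop, g.eval₂ (eval₂RingHom ρ l) (m l) = 0) → G.eval₂ ρ c = 0 := by
  refine ⟨(toSlope A g).leadingCoeff, leadingCoeff_ne_zero.2 (toSlope_ne_zero hg),
    fun ρ c m hm hroot ↦ ?_⟩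
  refine map_leadingCoeff_eq_zero_of_tendsto_atTop (toSlope A g) (ρ₀ := eval₂RingHom ρ c)
    (ρ := fun l ↦ eval₂RingHom ρ (m l / l))
    (fun a ↦ ((a.continuous_eval₂ ρ).tendsto c).comp hm) tendsto_id ?_
  filter_upwards [hroot, eventually_ne_atTop 0] with l hl hl₀
  rw [id, eval₂_toSlope, div_mul_cancel₀ _ hl₀, hl]

theorem norm_le_add_one_of_isRoot {K : Type*} [NormedDivisionRing K] {p : K[X]} {M : ℝ}
    (hp : p ≠ 0) (hM : 0 ≤ M) (hcoeff : ∀ k < p.natDegree, ‖p.coeff k‖ ≤ M * ‖p.leadingCoeff‖)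
    {a : K} (ha : p.IsRoot a) : ‖a‖ ≤ M + 1 := by
  lift M to NNReal using hM
  have hlead : 0 < ‖p.leadingCoeff‖₊ := nnnorm_pos.2 (leadingCoeff_ne_zero.2 hp)
  have hcauchy : p.cauchyBound ≤ M + 1 := by
    unfold cauchyBound
    gcongr
    exact div_le_of_le_mul₀ hlead.le zero_le
      (Finset.sup_le fun k hk ↦ hcoeff k (Finset.mem_range.1 hk))
  exact (ha.norm_lt_cauchyBound hp).le.trans hcauchy

theorem eventually_abs_coeff_eval_le {G : ℝ[X][Y]} (hG : G ≠ 0) :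
    ∃ d : ℕ, ∀ᶠ x in atTop, ∀ k < G.natDegree,
      |(G.coeff k).eval x| ≤ x ^ d * |G.leadingCoeff.eval x| := by
  let D := (Finset.range G.natDegree).sup fun k ↦ (G.coeff k).natDegree
  refine ⟨D + 1, ?_⟩
  suffices ∀ k ∈ Finset.range G.natDegree, ∀ᶠ x in atTop,
      |(G.coeff k).eval x| ≤ x ^ (D + 1) * |G.leadingCoeff.eval x| by
    simpa only [Finset.mem_range] using (eventually_all_finset _).2 this
  intro k hk
  have hdegree : (G.coeff k).degree < (X ^ (D + 1) * G.leadingCoeff).degree :=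
    calc (G.coeff k).degree ≤ D :=
          degree_le_of_natDegree_le (Finset.le_sup (f := fun k ↦ (G.coeff k).natDegree) hk)
      _ < (D + 1 : ℕ) := Nat.cast_lt.2 D.lt_succ_self
      _ ≤ (X ^ (D + 1) * G.leadingCoeff).degree := by
          rw [degree_mul, degree_X_pow]
          exact le_add_of_nonneg_right (zero_le_degree_iff.2 (leadingCoeff_ne_zero.2 hG))
  filter_upwards [(isLittleO_atTop_of_degree_lt _ _ hdegree).bound one_pos,
    eventually_ge_atTop 0] with x hx hx₀
  simpa [abs_of_nonneg hx₀] using hx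

theorem exists_eventually_abs_le_pow_of_evalEval_eq_zero {G : ℝ[X][Y]} (hG : G ≠ 0) :
    ∃ d : ℕ, ∀ᶠ x in atTop, ∀ y, G.evalEval x y = 0 → |y| ≤ x ^ d + 1 := by
  obtain ⟨d, hd⟩ := eventually_abs_coeff_eval_le hG
  refine ⟨d, ?_⟩
  filter_upwards [hd, eventually_ge_atTop 0,
    eventually_atTop_not_isRoot _ (leadingCoeff_ne_zero.2 hG)] with x hcoeff hx hlead y hy
  set p : ℝ[X] := G.map (evalRingHom x)
  have hlead' : p.leadingCoeff = G.leadingCoeff.eval x :=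
    leadingCoeff_map_of_leadingCoeff_ne_zero _ hlead
  have hdegree : p.natDegree = G.natDegree := natDegree_map_of_leadingCoeff_ne_zero _ hlead
  refine norm_le_add_one_of_isRoot (p := p) ?_ (by positivity) ?_ ?_
  · exact leadingCoeff_ne_zero.1 (hlead'.trans_ne hlead)
  · intro k hk
    rw [hlead', coeff_map]
    exact hcoeff k (hdegree ▸ hk)
  · rwa [IsRoot, map_evalRingHom_eval]

end Asymptotics

section OptimalValue

open MvPolynomial Filter

variable {σ : Type*}

theorem continuous_mvPolynomial_eval₂ {R S : Type*} [CommSemiring R] [CommSemiring S]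
    [TopologicalSpace S] [IsTopologicalSemiring S] (ρ : R →+* S) (p : MvPolynomial σ R) :
    Continuous fun v ↦ p.eval₂ ρ v := by
  simpa only [← MvPolynomial.eval_map] using (p.map ρ).continuous_eval

/-- The objective and constraint parts of the penalty functional of `Q` and `H`, with the penalty
parameter as the indeterminate of the coefficient ring. The regularising term is left out, as its
degree has to exceed the degree of this polynomial. -/
noncomputable def penaltyPolynomial {R : Type*} [CommSemiring R] (Q H : MvPolynomial σ R) :
    MvPolynomial σ (Polynomial R) :=
  C Polynomial.X * Q.map Polynomial.C + C (Polynomial.X ^ 2) * H.map Polynomial.C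

theorem eval₂_penaltyPolynomial {R S : Type*} [CommSemiring R] [CommSemiring S]
    (Q H : MvPolynomial σ R) (ρ : R →+* S) (l : S) (v : σ → S) :
    (penaltyPolynomial Q H).eval₂ (Polynomial.eval₂RingHom ρ l) v =
      l * Q.eval₂ ρ v + l ^ 2 * H.eval₂ ρ v := by
  simp [penaltyPolynomial]

theorem exists_eval₂_eq_zero_of_isMinOn [Finite σ] {R : Type*} [CommRing R] [Nontrivial R]
    [Algebra ℚ R] (Q H : MvPolynomial σ R) :
    ∃ G : Polynomial R, G ≠ 0 ∧ ∀ (ρ : R →+* ℝ) (u : σ → ℝ), (∀ v, 0 ≤ Q.eval₂ ρ v) →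
      (∀ v, 0 ≤ H.eval₂ ρ v) → Tendsto (fun v ↦ H.eval₂ ρ v) (cocompact (σ → ℝ)) atTop →
      H.eval₂ ρ u = 0 → IsMinOn (fun v ↦ Q.eval₂ ρ v) {v | H.eval₂ ρ v = 0} u →
      G.eval₂ ρ (Q.eval₂ ρ u) = 0 := by
  cases nonempty_fintype σ
  set L := penaltyPolynomial Q H
  set N := 2 * (L.totalDegree + 1)
  have := module_finite_quotient_gradientIdeal (L := L) (N := N) (by omega)
  obtain ⟨g, hg, hcritical⟩ := exists_monic_eval₂_critical_value_eq_zero (L + ∑ i, X i ^ N)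
  obtain ⟨G, hG, hlimit⟩ := exists_eval₂_eq_zero_of_tendsto_div hg
  refine ⟨G, hG, fun ρ u hQ hH hcoercive hu hmin ↦ ?_⟩
  let J := penalty (fun v ↦ Q.eval₂ ρ v) (fun v ↦ H.eval₂ ρ v) fun v : σ → ℝ ↦ ∑ i, v i ^ N
  have hJ (l : ℝ) (v : σ → ℝ) :
      (L + ∑ i, X i ^ N).eval₂ (Polynomial.eval₂RingHom ρ l) v = J l v := by
    simp [L, J, penalty, eval₂_penaltyPolynomial]
  have hb (v : σ → ℝ) : 0 ≤ ∑ i, v i ^ N :=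
    Finset.sum_nonneg fun i _ ↦ (even_two_mul _).pow_nonneg (v i)
  have hQcont := continuous_mvPolynomial_eval₂ ρ Q
  have hHcont := continuous_mvPolynomial_eval₂ ρ H
  choose! v hv using fun l (hl : 1 ≤ l) ↦
    exists_forall_penalty_le hQcont hHcont (by fun_prop) hQ hH hb hcoercive hl
  have hv' : ∀ᶠ l in atTop, ∀ w, J l (v l) ≤ J l w := (eventually_ge_atTop 1).mono hv
  refine hlimit ρ _ (fun l ↦ J l (v l))
    (tendsto_penalty_div hQcont hHcont hQ hH hb hcoercive hu hmin hv') ?_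
  filter_upwards [hv'] with l hl
  simp only [← hJ] at hl ⊢
  exact hcritical _ _ (eval₂_pderiv_eq_zero_of_forall_le _ hl)

end OptimalValue

section Growth

open MvPolynomial Filter

theorem exists_nonneg_eval_eq_zero_iff {σ : Type*} [Finite σ] (B : Set (MvPolynomial σ ℝ)) :
    ∃ F : MvPolynomial σ ℝ, (∀ v, 0 ≤ eval v F) ∧
      ∀ v, eval v F = 0 ↔ ∀ p ∈ B, eval v p = 0 := by
  obtain ⟨S, hS⟩ : (Ideal.span B).FG := IsNoetherian.noetherian _
  have hspan (A : Set (MvPolynomial σ ℝ)) (v : σ → ℝ) :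
      (∀ p ∈ A, eval v p = 0) ↔ Ideal.span A ≤ RingHom.ker (eval v) := by
    rw [Ideal.span_le]; rfl
  refine ⟨∑ p ∈ S, p ^ 2, fun v ↦ ?_, fun v ↦ ?_⟩
  · simp only [map_sum, map_pow]
    positivity
  · rw [hspan B, ← hS, ← hspan]
    simp only [map_sum, map_pow]
    rw [Finset.sum_eq_zero_iff_of_nonneg fun _ _ ↦ sq_nonneg _]
    simp

variable {σ : Type*} [Fintype σ]

theorem abs_apply_le_one_add_sum_sq (v : σ → ℝ) (i : σ) : |v i| ≤ 1 + ∑ j, v j ^ 2 := by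
  have hi : v i ^ 2 ≤ ∑ j, v j ^ 2 :=
    Finset.single_le_sum (f := fun j ↦ v j ^ 2) (fun j _ ↦ sq_nonneg (v j)) (Finset.mem_univ i)
  rw [← sq_abs] at hi
  nlinarith [sq_nonneg (|v i| - 1)]

theorem norm_le_one_add_sum_sq (v : σ → ℝ) : ‖v‖ ≤ 1 + ∑ i, v i ^ 2 :=
  (pi_norm_le_iff_of_nonneg (by positivity)).2 (abs_apply_le_one_add_sum_sq v)

theorem tendsto_sum_sq_cocompact_atTop :
    Tendsto (fun v : σ → ℝ ↦ ∑ i, v i ^ 2) (cocompact (σ → ℝ)) atTop := by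
  refine tendsto_atTop_mono (fun v ↦ ?_)
    (tendsto_atTop_add_const_right _ (-1) (tendsto_norm_cocompact_atTop (E := σ → ℝ)))
  linarith [norm_le_one_add_sum_sq v]

theorem tendsto_add_sum_sq_sub_sq_cocompact_atTop {f : (σ → ℝ) → ℝ} (hf : ∀ v, 0 ≤ f v) (r : ℝ) :
    Tendsto (fun v ↦ f v + (∑ i, v i ^ 2 - r) ^ 2) (cocompact (σ → ℝ)) atTop := by
  refine tendsto_atTop_mono (fun v ↦ ?_)
    (tendsto_atTop_add_const_right _ (-(r + 1)) tendsto_sum_sq_cocompact_atTop)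
  nlinarith [hf v, sq_nonneg (∑ i, v i ^ 2 - r - 1)]

theorem exists_isMinOn_inter_sphere {f : (σ → ℝ) → ℝ} (hf : Continuous f) {s : Set (σ → ℝ)}
    (hs : IsClosed s) {v : σ → ℝ} (hv : v ∈ s) :
    ∃ u ∈ {w ∈ s | ∑ i, w i ^ 2 = ∑ i, v i ^ 2},
      IsMinOn f {w ∈ s | ∑ i, w i ^ 2 = ∑ i, v i ^ 2} u := by
  have hclosed : IsClosed {w : σ → ℝ | ∑ i, w i ^ 2 = ∑ i, v i ^ 2} :=
    isClosed_eq (by fun_prop) continuous_const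
  refine hf.continuousOn.exists_isMinOn' (hs.inter hclosed) (x₀ := v) ⟨hv, rfl⟩ ?_
  filter_upwards [(tendsto_sum_sq_cocompact_atTop.eventually_gt_atTop
    (∑ i, v i ^ 2)).filter_mono inf_le_left, mem_inf_of_right (mem_principal_self _)]
    with w hlt hw
  exact absurd hw.2 hlt.ne'

theorem exists_evalEval_eq_zero_of_isMinOn_inter_sphere {F Q : MvPolynomial σ ℝ}
    (hF : ∀ v, 0 ≤ eval v F) (hQ : ∀ v, 0 ≤ eval v Q) :
    ∃ G : Polynomial (Polynomial ℝ), G ≠ 0 ∧ ∀ u, eval u F = 0 →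
      IsMinOn (fun v ↦ eval v Q) {v ∈ {v | eval v F = 0} | ∑ i, v i ^ 2 = ∑ i, u i ^ 2} u →
      G.evalEval (eval u Q) (∑ i, u i ^ 2) = 0 := by
  let H : MvPolynomial σ (Polynomial ℝ) :=
    F.map Polynomial.C + (∑ i, X i ^ 2 - C Polynomial.X) ^ 2
  have hmap (p : MvPolynomial σ ℝ) (r : ℝ) (v : σ → ℝ) :
      (p.map Polynomial.C).eval₂ (Polynomial.evalRingHom r) v = eval v p :=
    (eval₂_map _ _ _ _).trans (by
      rw [Polynomial.evalRingHom, Polynomial.eval₂RingHom_comp_C, eval₂_id])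
  have hH (r : ℝ) (v : σ → ℝ) :
      H.eval₂ (Polynomial.evalRingHom r) v = eval v F + (∑ i, v i ^ 2 - r) ^ 2 := by
    simp [H, pow_two, -eval₂_map, hmap]
  have hH₀ (r : ℝ) (v : σ → ℝ) :
      eval v F + (∑ i, v i ^ 2 - r) ^ 2 = 0 ↔ eval v F = 0 ∧ ∑ i, v i ^ 2 = r := by
    rw [add_eq_zero_iff_of_nonneg (hF v) (sq_nonneg _), sq_eq_zero_iff, sub_eq_zero]
  obtain ⟨G, hG, hroot⟩ := exists_eval₂_eq_zero_of_isMinOn (Q.map Polynomial.C) H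
  refine ⟨Polynomial.Bivariate.swap G, by simpa using hG, fun u hu hmin ↦ ?_⟩
  have := hroot (Polynomial.evalRingHom (∑ i, u i ^ 2)) u
  simp only [hmap, hH, hH₀] at this
  rw [← Polynomial.coe_aevalAeval_eq_evalEval, Polynomial.Bivariate.aevalAeval_swap,
    Polynomial.coe_aevalAeval_eq_evalEval, ← Polynomial.eval₂_evalRingHom]
  exact this hQ (fun v ↦ add_nonneg (hF v) (sq_nonneg _))
    (tendsto_add_sum_sq_sub_sq_cocompact_atTop hF _) ⟨hu, trivial⟩ hmin

theorem exists_sum_sq_le_mul_one_add_eval_pow {F Q : MvPolynomial σ ℝ}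
    (hF : ∀ v, 0 ≤ eval v F) (hQ : ∀ v, 0 ≤ eval v Q)
    (hsublevel : ∀ T, Bornology.IsBounded {v | eval v F = 0 ∧ eval v Q ≤ T}) :
    ∃ (c : ℝ) (d : ℕ), ∀ v, eval v F = 0 → ∑ i, v i ^ 2 ≤ c * (1 + eval v Q) ^ d := by
  obtain ⟨G, hG, hroot⟩ := exists_evalEval_eq_zero_of_isMinOn_inter_sphere hF hQ
  obtain ⟨d, hd⟩ := exists_eventually_abs_le_pow_of_evalEval_eq_zero hG
  obtain ⟨T, hT⟩ := eventually_atTop.1 hd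
  obtain ⟨B, hB⟩ : BddAbove ((fun v ↦ ∑ i, v i ^ 2) '' {v | eval v F = 0 ∧ eval v Q ≤ T}) :=
    ((hsublevel T).isCompact_closure.bddAbove_image (by fun_prop)).mono
      (Set.image_mono subset_closure)
  refine ⟨|B| + 2, d, fun v hv ↦ ?_⟩
  obtain ⟨u, ⟨hu, huv⟩, hmin⟩ := exists_isMinOn_inter_sphere Q.continuous_eval
    (isClosed_eq F.continuous_eval continuous_const) hv
  have hQuv : eval u Q ≤ eval v Q := hmin ⟨hv, rfl⟩
  rw [← huv] at hmin ⊢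
  have hone : 1 ≤ (1 + eval v Q) ^ d := one_le_pow₀ (by linarith [hQ v])
  rcases le_total (eval u Q) T with hsmall | hlarge
  · have : ∑ i, u i ^ 2 ≤ B := hB ⟨u, ⟨hu, hsmall⟩, rfl⟩
    nlinarith [le_abs_self B, abs_nonneg B]
  · calc ∑ i, u i ^ 2 ≤ eval u Q ^ d + 1 :=
          (le_abs_self _).trans (hT _ hlarge _ (hroot u hu hmin))
      _ ≤ (1 + eval v Q) ^ d + 1 := by
          gcongr
          · exact hQ u
          · linarith
      _ ≤ (|B| + 2) * (1 + eval v Q) ^ d := by nlinarith [abs_nonneg B]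

end Growth

/-- **Polynomial bound along a proper algebraic map.**
Let `V ⊆ ℝⁿ` and `W ⊆ ℝᵐ` be real algebraic sets (zero sets of families `BV`, `BW` of
polynomials) and let `π : V(ℝ) → W(ℝ)` be a proper algebraic map (given by polynomials `q`,
with preimages of compact sets compact for the Euclidean topologies).  Then there exist
constants `c, d ∈ ℕ` such that for every `v ∈ V` and every coordinate function `xᵢ`,
`|xᵢ(v)| ≤ c * (1 + N(π(v))²)^d`, where `N(s) = √(s₁² + ⋯ + sₘ²)` is the Euclidean norm. -/
theorem polynomial_bound_of_proper_algebraic_map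
    (n m : ℕ)
    (BV : Set (MvPolynomial (Fin n) ℝ)) (BW : Set (MvPolynomial (Fin m) ℝ))
    (V : Set (Fin n → ℝ)) (W : Set (Fin m → ℝ))
    (hV : V = {v | ∀ p ∈ BV, MvPolynomial.eval v p = 0})
    (hW : W = {w | ∀ p ∈ BW, MvPolynomial.eval w p = 0})
    (q : Fin m → MvPolynomial (Fin n) ℝ)
    (π : (Fin n → ℝ) → (Fin m → ℝ))
    (hπ : ∀ v, π v = fun j => MvPolynomial.eval v (q j))
    (hmaps : ∀ v ∈ V, π v ∈ W)
    (hproper : ∀ C : Set (Fin m → ℝ), IsCompact C → IsCompact {v ∈ V | π v ∈ C}) :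
    ∃ c d : ℕ, ∀ v ∈ V, ∀ i : Fin n,
      |v i| ≤ (c : ℝ) * (1 + Real.sqrt (∑ j, (π v j) ^ 2) ^ 2) ^ d := by
  obtain ⟨F, hF, hFV⟩ := exists_nonneg_eval_eq_zero_iff BV
  let Q := ∑ j, q j ^ 2
  have hQ (v : Fin n → ℝ) : MvPolynomial.eval v Q = ∑ j, π v j ^ 2 := by simp [Q, hπ]
  have hmem (v : Fin n → ℝ) : v ∈ V ↔ MvPolynomial.eval v F = 0 := by rw [hV, hFV]; rfl
  have hsublevel (T : ℝ) :
      Bornology.IsBounded {v | MvPolynomial.eval v F = 0 ∧ MvPolynomial.eval v Q ≤ T} := by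
    refine (hproper _ (isCompact_closedBall 0 (1 + T))).isBounded.subset ?_
    rintro v ⟨hv, hvT⟩
    refine ⟨(hmem v).2 hv, mem_closedBall_zero_iff.2 ?_⟩
    linarith [norm_le_one_add_sum_sq (π v), hQ v]
  obtain ⟨c, d, hbound⟩ := exists_sum_sq_le_mul_one_add_eval_pow hF
    (fun v ↦ (hQ v).symm ▸ by positivity) hsublevel
  refine ⟨1 + ⌈c⌉₊, d, fun v hv i ↦ ?_⟩
  have hone : 1 ≤ (1 + ∑ j, π v j ^ 2) ^ d := one_le_pow₀ (le_add_of_nonneg_right (by positivity))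
  rw [Real.sq_sqrt (by positivity)]
  push_cast
  calc |v i| ≤ 1 + ∑ i, v i ^ 2 := abs_apply_le_one_add_sum_sq v i
    _ ≤ 1 + c * (1 + ∑ j, π v j ^ 2) ^ d := by
        rw [← hQ]; gcongr; exact hbound v ((hmem v).1 hv)
    _ ≤ (1 + ⌈c⌉₊) * (1 + ∑ j, π v j ^ 2) ^ d := by
        nlinarith [Nat.le_ceil c]
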